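/- arXiv:1404.3876 — 2 statements merged into one kernel-verified Lean document; each statement's English description precedes it below -/
import Mathlib

section
/- Let M be a d×n integer matrix of full row rank d all of whose d×d minors lie in {-1,0,1} (a unimodular matrix), and let D = diag(w₁,…,wₙ) be an n×n diagonal matrix with nonnegative real diagonal entries. Write M_ω = M·D and L_ω = M·D·Mᵀ (the weighted Laplacian). Then the Lebesgue volume of the zonotope Z(L_ω) equals the Lebesgue volume of the zonotope Z(M_ω), and both equal det(L_ω). -/
open MeasureTheory

/-- The zonotope generated by a `d × n` real matrix: the image of the unit cube
`[0,1]^n` under the linear map `x ↦ M x`. -/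
def zonotope {d n : ℕ} (M : Matrix (Fin d) (Fin n) ℝ) : Set (Fin d → ℝ) :=
  {y | ∃ x : Fin n → ℝ, (∀ i, x i ∈ Set.Icc (0 : ℝ) 1) ∧ y = M.mulVec x}

lemma zn_isCompact {d n : ℕ} (M : Matrix (Fin d) (Fin n) ℝ) : IsCompact (zonotope M) := by
  have h : zonotope M = (fun x => M.mulVec x) '' (Set.univ.pi fun _ => Set.Icc (0:ℝ) 1) := by
    ext y
    simp only [zonotope, Set.mem_ofPred_eq, Set.mem_image, Set.mem_univ_pi, eq_comm]
  rw [h]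
  refine (isCompact_univ_pi fun _ => isCompact_Icc).image ?_
  exact (Matrix.mulVecLin M).continuous_of_finiteDimensional

lemma zn_convex {d n : ℕ} (M : Matrix (Fin d) (Fin n) ℝ) : Convex ℝ (zonotope M) := by
  have h : zonotope M = (Matrix.mulVecLin M) '' (Set.univ.pi fun _ => Set.Icc (0:ℝ) 1) := by
    ext y
    simp only [zonotope, Set.mem_ofPred_eq, Set.mem_image, Set.mem_univ_pi, eq_comm,
      Matrix.mulVecLin_apply]
  rw [h]
  exact (convex_pi fun _ _ => convex_Icc _ _).linear_image _

lemma zn_mul {d n : ℕ} (g : Matrix (Fin d) (Fin d) ℝ) (M : Matrix (Fin d) (Fin n) ℝ) :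
    volume (zonotope (g * M)) = ENNReal.ofReal |g.det| * volume (zonotope M) := by
  have h : zonotope (g * M) = (Matrix.toLin' g) '' zonotope M := by
    ext y
    simp only [zonotope, Set.mem_ofPred_eq, Set.mem_image, Matrix.toLin'_apply]
    constructor
    · rintro ⟨x, hx, rfl⟩
      exact ⟨_, ⟨x, hx, rfl⟩, by simp⟩
    · rintro ⟨_, ⟨x, hx, rfl⟩, rfl⟩
      exact ⟨x, hx, by simp⟩
  rw [h, Measure.addHaar_image_linearMap, LinearMap.det_toLin']

lemma zn_slice {d : ℕ} (K : Set (Fin (d+1) → ℝ)) (hK : MeasurableSet K) :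
    volume K = ∫⁻ y : Fin d → ℝ, volume {t : ℝ | (Fin.cons t y : Fin (d+1) → ℝ) ∈ K} := by
  have h := (volume_preserving_piFinSuccAbove (fun _ : Fin (d+1) => ℝ) 0).symm
  rw [← h.measure_preimage hK.nullMeasurableSet, Measure.volume_eq_prod, Measure.prod_apply_symm]
  · refine lintegral_congr fun y => ?_
    congr 1
    ext t
    simp [MeasurableEquiv.piFinSuccAbove]
    rfl
  · exact h.measurable hK

lemma zn_interval (S : Set ℝ) (hS : IsCompact S) (hc : Convex ℝ S) (hne : S.Nonempty) (w : ℝ)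
    (hw : 0 ≤ w) :
    volume {x | ∃ t ∈ Set.Icc (0:ℝ) 1, x - t * w ∈ S} = volume S + ENNReal.ofReal w := by
  have h := eq_Icc_of_connected_compact ⟨hne, hc.isPreconnected⟩ hS
  set a := sInf S
  set b := sSup S
  have hab : a ≤ b := by
    rw [h] at hne
    exact Set.nonempty_Icc.1 hne
  have h2 : {x | ∃ t ∈ Set.Icc (0:ℝ) 1, x - t * w ∈ S} = Set.Icc a (b + w) := by
    rw [h]
    ext x
    simp only [Set.mem_ofPred_eq, Set.mem_Icc]
    constructor
    · rintro ⟨t, ⟨h0, h1⟩, h3, h4⟩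
      constructor <;> nlinarith
    · rintro ⟨h3, h4⟩
      rcases le_or_gt x b with hx | hx
      · exact ⟨0, by simp, by simpa using ⟨h3, hx⟩⟩
      · have hw' : 0 < w := by linarith
        refine ⟨(x - b) / w, ⟨by apply div_nonneg <;> linarith, ?_⟩, ?_⟩
        · rw [div_le_one hw']; linarith
        · rw [div_mul_cancel₀ _ hw'.ne']
          constructor <;> linarith
  rw [h2, h, Real.volume_Icc, Real.volume_Icc, ← ENNReal.ofReal_add (by linarith) hw]
  congr 1; ring

lemma zn_sweep {d : ℕ} (K K' : Set (Fin (d+1) → ℝ)) (hK : IsCompact K) (hc : Convex ℝ K)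
    (hK' : IsCompact K') (w : ℝ) (hw : 0 ≤ w)
    (h : ∀ x y, (Fin.cons x y : Fin (d+1) → ℝ) ∈ K' ↔
      ∃ t ∈ Set.Icc (0:ℝ) 1, (Fin.cons (x - t * w) y : Fin (d+1) → ℝ) ∈ K)
    (P : Set (Fin d → ℝ)) (hP : IsCompact P)
    (hPK : ∀ y, y ∈ P ↔ ∃ t, (Fin.cons t y : Fin (d+1) → ℝ) ∈ K) :
    volume K' = volume K + ENNReal.ofReal w * volume P := by
  rw [zn_slice K' hK'.measurableSet, zn_slice K hK.measurableSet]
  have hi : ENNReal.ofReal w * volume P =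
      ∫⁻ y, P.indicator (fun _ => ENNReal.ofReal w) y := by
    rw [lintegral_indicator_const hP.measurableSet]
  rw [hi, ← lintegral_add_right _ (measurable_const.indicator hP.measurableSet)]
  refine lintegral_congr fun y => ?_
  have hcont : Continuous (fun t : ℝ => (Fin.cons t y : Fin (d+1) → ℝ)) := by
    refine continuous_pi fun i => ?_
    refine Fin.cases ?_ (fun j => ?_) i
    · exact continuous_id
    · simpa using continuous_const
  by_cases hy : y ∈ P
  · rw [Set.indicator_of_mem hy]
    rw [← zn_interval {t : ℝ | (Fin.cons t y : Fin (d+1) → ℝ) ∈ K} _ _ ((hPK y).1 hy) w hw]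
    · congr 1
      ext x
      exact h x y
    · have h0 : IsCompact ((fun z : Fin (d+1) → ℝ => z 0) '' K) := hK.image (continuous_apply 0)
      refine h0.of_isClosed_subset (hK.isClosed.preimage hcont) ?_
      intro t ht
      exact ⟨_, ht, by simp⟩
    · intro s hs t ht a b ha hb hab
      have := hc hs ht ha hb hab
      simp only [Set.mem_ofPred_eq]
      convert this using 1
      funext i
      refine Fin.cases ?_ (fun j => ?_) i
      · simp
      · simp [← add_mul, hab]
  · rw [Set.indicator_of_notMem hy, add_zero]
    rw [hPK] at hy
    push Not at hy
    congr 1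
    ext x
    simp only [Set.mem_ofPred_eq, h, hy]
    simp

lemma zn_det_add {d : ℕ} (L L' : Matrix (Fin (d+1)) (Fin (d+1)) ℝ) (w : ℝ)
    (h0 : L' 0 0 = L 0 0 + w) (h : ∀ i j, (i ≠ 0 ∨ j ≠ 0) → L' i j = L i j) :
    L'.det = L.det + w * (L.submatrix Fin.succ Fin.succ).det := by
  rw [Matrix.det_succ_row_zero, Matrix.det_succ_row_zero L]
  have hs : ∀ j : Fin (d+1), L'.submatrix Fin.succ j.succAbove = L.submatrix Fin.succ j.succAbove := by
    intro j; ext a b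
    simp [h a.succ (j.succAbove b) (Or.inl (Fin.succ_ne_zero a))]
  simp only [hs, Fin.sum_univ_succ, h0]
  have : ∀ j : Fin d, L' 0 j.succ = L 0 j.succ := fun j => h _ _ (Or.inr (Fin.succ_ne_zero j))
  simp only [this, Fin.succAbove_zero]
  simp
  ring

lemma zn_mem_succ {d n : ℕ} (M : Matrix (Fin d) (Fin (n+1)) ℝ) (w : Fin (n+1) → ℝ)
    (y : Fin d → ℝ) :
    y ∈ zonotope (M * Matrix.diagonal w) ↔ ∃ t ∈ Set.Icc (0:ℝ) 1,
      (fun i => y i - t * w 0 * M i 0) ∈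
        zonotope (M.submatrix id Fin.succ * Matrix.diagonal (fun i : Fin n => w i.succ)) := by
  constructor
  · rintro ⟨x, hx, rfl⟩
    refine ⟨x 0, hx 0, fun i => x i.succ, fun i => hx _, ?_⟩
    funext i
    simp only [Matrix.mulVec, dotProduct, Matrix.mul_diagonal, Fin.sum_univ_succ,
      Matrix.submatrix_apply, id]
    ring
  · rintro ⟨t, ht, x, hx, h⟩
    refine ⟨Fin.cons t x, fun i => ?_, ?_⟩
    · refine Fin.cases ?_ (fun j => ?_) i
      · simpa using ht
      · simpa using hx j
    · funext i
      have := congrFun h i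
      simp only [Matrix.mulVec, dotProduct, Matrix.mul_diagonal, Fin.sum_univ_succ,
        Matrix.submatrix_apply, id, Fin.cons_zero, Fin.cons_succ] at this ⊢
      linarith

lemma zn_lap_succ {d n : ℕ} (M : Matrix (Fin d) (Fin (n+1)) ℝ) (w : Fin (n+1) → ℝ)
    (i j : Fin d) :
    (M * Matrix.diagonal w * M.transpose) i j =
      (M.submatrix id Fin.succ * Matrix.diagonal (fun i : Fin n => w i.succ) *
        (M.submatrix id Fin.succ).transpose) i j + w 0 * M i 0 * M j 0 := by
  rw [Matrix.mul_apply, Matrix.mul_apply]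
  simp only [Matrix.mul_diagonal, Fin.sum_univ_succ, Matrix.submatrix_apply, id,
    Matrix.transpose_apply]
  ring

lemma zn_lap_nonneg {d n : ℕ} (M : Matrix (Fin d) (Fin n) ℝ) (w : Fin n → ℝ) (hw : ∀ i, 0 ≤ w i) :
    0 ≤ (M * Matrix.diagonal w * M.transpose).det := by
  have h : (Matrix.diagonal w).PosSemidef := Matrix.PosSemidef.diagonal hw
  have := (h.mul_mul_conjTranspose_same M).det_nonneg
  simpa [Matrix.conjTranspose_eq_transpose_of_trivial] using this

lemma zn_zero (n : ℕ) (M : Matrix (Fin 0) (Fin n) ℝ) : volume (zonotope M) = 1 := by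
  have : zonotope M = Set.univ := by
    ext y
    simp only [Set.mem_univ, iff_true]
    exact ⟨fun _ => 0, by simp, Subsingleton.elim _ _⟩
  rw [this]
  simp [volume_pi]

lemma zn_main (n : ℕ) : ∀ (d : ℕ) (M : Matrix (Fin d) (Fin n) ℝ) (w : Fin n → ℝ) (c : ℝ),
    (∀ i, 0 ≤ w i) → 0 ≤ c →
    (∀ f : Fin d → Fin n, (M.submatrix id f).det ^ 2 = c * |(M.submatrix id f).det|) →
    ENNReal.ofReal c * volume (zonotope (M * Matrix.diagonal w)) =
      ENNReal.ofReal (M * Matrix.diagonal w * M.transpose).det := by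
  induction n with
  | zero =>
    intro d M w c hw hc hM
    cases d with
    | zero =>
      have := hM Fin.elim0
      simp at this
      simp [zn_zero, ← this]
    | succ d =>
      have h1 : volume (zonotope (M * Matrix.diagonal w)) = 0 := by
        have : zonotope (M * Matrix.diagonal w) ⊆ {0} := by
          rintro y ⟨x, hx, rfl⟩
          simp [Matrix.mulVec, funext_iff, dotProduct]
        exact measure_mono_null this (by simp)
      have h2 : M * Matrix.diagonal w * M.transpose = 0 := by
        ext i j
        rw [Matrix.mul_apply]; simp
      rw [h1, h2, Matrix.det_zero]
      simp
  | succ n ih =>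
    intro d M w c hw hc hM
    cases d with
    | zero =>
      have := hM Fin.elim0
      simp at this
      simp [zn_zero, ← this]
    | succ d =>
      -- the case where the first column is the first unit vector
      have key : ∀ (M : Matrix (Fin (d+1)) (Fin (n+1)) ℝ) (c : ℝ), 0 ≤ c →
          (∀ f : Fin (d+1) → Fin (n+1),
            (M.submatrix id f).det ^ 2 = c * |(M.submatrix id f).det|) →
          (M 0 0 = 1) → (∀ i : Fin d, M i.succ 0 = 0) →
          ENNReal.ofReal c * volume (zonotope (M * Matrix.diagonal w)) =
            ENNReal.ofReal (M * Matrix.diagonal w * M.transpose).det := by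
        intro M c hc hM h0 h1
        have iA := ih (d+1) (M.submatrix id Fin.succ) (fun i => w i.succ) c (fun i => hw _) hc
          (fun f => hM (Fin.succ ∘ f))
        have iB := ih d (M.submatrix Fin.succ Fin.succ) (fun i => w i.succ) c (fun i => hw _) hc
          (fun f => by
            have := hM (Fin.cons 0 (Fin.succ ∘ f))
            have e : (M.submatrix id (Fin.cons 0 (Fin.succ ∘ f) : Fin (d+1) → Fin (n+1))).det =
                ((M.submatrix Fin.succ Fin.succ).submatrix id f).det := by
              rw [Matrix.det_succ_column_zero, Fin.sum_univ_succ]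
              simp [h0, h1]
            rwa [e] at this)
        have hdet := zn_det_add
          (M.submatrix id Fin.succ * Matrix.diagonal (fun i : Fin n => w i.succ) *
            (M.submatrix id Fin.succ).transpose)
          (M * Matrix.diagonal w * M.transpose) (w 0)
          (by rw [zn_lap_succ, h0]; ring)
          (by
            intro i j hij
            rw [zn_lap_succ]
            rcases hij with h | h
            · obtain ⟨k, rfl⟩ := Fin.exists_succ_eq.2 h
              simp [h1]
            · obtain ⟨k, rfl⟩ := Fin.exists_succ_eq.2 h
              simp [h1])
        have hsub : (M.submatrix id Fin.succ * Matrix.diagonal (fun i : Fin n => w i.succ) *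
            (M.submatrix id Fin.succ).transpose).submatrix Fin.succ Fin.succ =
            M.submatrix Fin.succ Fin.succ * Matrix.diagonal (fun i : Fin n => w i.succ) *
            (M.submatrix Fin.succ Fin.succ).transpose := by
          ext i j
          rw [Matrix.submatrix_apply, Matrix.mul_apply, Matrix.mul_apply]
          simp [Matrix.mul_diagonal]
        rw [hsub] at hdet
        have hvol := zn_sweep
          (zonotope (M.submatrix id Fin.succ * Matrix.diagonal (fun i : Fin n => w i.succ)))
          (zonotope (M * Matrix.diagonal w)) (zn_isCompact _) (zn_convex _) (zn_isCompact _)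
          (w 0) (hw 0)
          (by
            intro x y
            rw [zn_mem_succ]
            have : ∀ t, (fun i => (Fin.cons x y : Fin (d+1) → ℝ) i - t * w 0 * M i 0) =
                Fin.cons (x - t * w 0) y := by
              intro t
              funext i
              refine Fin.cases ?_ (fun j => ?_) i
              · simp [h0]
              · simp [h1]
            simp only [this])
          (zonotope (M.submatrix Fin.succ Fin.succ * Matrix.diagonal (fun i : Fin n => w i.succ)))
          (zn_isCompact _)
          (by
            intro y
            constructor
            · rintro ⟨x, hx, rfl⟩
              refine ⟨((M.submatrix id Fin.succ *
                Matrix.diagonal (fun i : Fin n => w i.succ)).mulVec x) 0, x, hx, ?_⟩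
              funext i
              refine Fin.cases ?_ (fun j => ?_) i
              · simp
              · simp [Matrix.mulVec, dotProduct, Matrix.mul_diagonal]
            · rintro ⟨t, x, hx, h⟩
              refine ⟨x, hx, ?_⟩
              funext i
              have := congrFun h i.succ
              simpa [Matrix.mulVec, dotProduct, Matrix.mul_diagonal] using this)
        rw [hvol, hdet, ENNReal.ofReal_add (zn_lap_nonneg _ _ fun i => hw _)
          (mul_nonneg (hw 0) (zn_lap_nonneg _ _ fun i => hw _)), ENNReal.ofReal_mul (hw 0),
          ← iA, ← iB]
        ring
      by_cases hv : M.col 0 = 0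
      · have hv' : ∀ i, M i 0 = 0 := fun i => congrFun hv i
        have iA := ih (d+1) (M.submatrix id Fin.succ) (fun i => w i.succ) c (fun i => hw _) hc
          (fun f => hM (Fin.succ ∘ f))
        have e1 : M * Matrix.diagonal w * M.transpose =
            (M.submatrix id Fin.succ * Matrix.diagonal (fun i : Fin n => w i.succ) *
              (M.submatrix id Fin.succ).transpose) := by
          ext i j
          rw [zn_lap_succ]; simp [hv']
        have e2 : zonotope (M * Matrix.diagonal w) =
            zonotope (M.submatrix id Fin.succ * Matrix.diagonal (fun i : Fin n => w i.succ)) := by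
          ext y
          rw [zn_mem_succ]
          simp only [hv', mul_zero, sub_zero]
          exact ⟨fun ⟨_, _, h⟩ => h, fun h => ⟨0, by simp, h⟩⟩
        rw [e1, e2, iA]
      · obtain ⟨A, hA⟩ := SeparatingDual.exists_continuousLinearEquiv_apply_eq (R := ℝ) hv
          (y := (Pi.single 0 1 : Fin (d+1) → ℝ)) (by simp)
        set g : Matrix (Fin (d+1)) (Fin (d+1)) ℝ :=
          LinearMap.toMatrix' (A.toLinearEquiv : (Fin (d+1) → ℝ) →ₗ[ℝ] (Fin (d+1) → ℝ)) with hg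
        have hgd : g.det ≠ 0 := by
          rw [hg, LinearMap.det_toMatrix']
          exact (LinearEquiv.isUnit_det' A.toLinearEquiv).ne_zero
        have hgv : ∀ i, (g * M) i 0 = (Pi.single 0 1 : Fin (d+1) → ℝ) i := by
          intro i
          rw [← hA]
          have : g.mulVec (M.col 0) = A (M.col 0) := by
            rw [hg, LinearMap.toMatrix'_mulVec]; rfl
          rw [← this]
          rfl
        have hk := key (g * M) (|g.det| * c) (by positivity)
          (by
            intro f
            have : (g * M).submatrix id f = g * M.submatrix id f := by
              ext i j; simp [Matrix.mul_apply]
            rw [this, Matrix.det_mul, mul_pow, hM f, abs_mul, ← sq_abs g.det]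
            ring)
          (by rw [hgv]; simp) (by intro i; rw [hgv]; simp)
        have e : g * M * Matrix.diagonal w * (g * M).transpose =
            g * (M * Matrix.diagonal w * M.transpose) * g.transpose := by
          simp only [Matrix.transpose_mul, Matrix.mul_assoc]
        rw [e, Matrix.det_mul, Matrix.det_mul, Matrix.det_transpose, Matrix.mul_assoc, zn_mul,
          show g.det * (M * Matrix.diagonal w * M.transpose).det * g.det =
            |g.det| * |g.det| * (M * Matrix.diagonal w * M.transpose).det by
              rw [abs_mul_abs_self]; ring,
          ENNReal.ofReal_mul (by positivity), ENNReal.ofReal_mul (by positivity),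
          ENNReal.ofReal_mul (by positivity)] at hk
        have hp : ENNReal.ofReal |g.det| ≠ 0 := by
          simpa using hgd
        have hp2 : ENNReal.ofReal |g.det| * ENNReal.ofReal |g.det| ≠ 0 := mul_ne_zero hp hp
        refine (ENNReal.mul_right_inj hp2 (by finiteness)).1 ?_
        rw [← hk]
        ring

/-- **Weighted polyhedral matrix tree theorem.** For a full row rank unimodular
integer matrix `M` and a diagonal matrix `D = diag(w₁,…,wₙ)` with nonnegative
real entries, with `M_ω = M·D` and weighted Laplacian `L_ω = M·D·Mᵀ`, the
Lebesgue volumes of `Z(L_ω)` and `Z(M_ω)` agree and both equal `det L_ω`. -/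
theorem stmt10 (d n : ℕ) (M : Matrix (Fin d) (Fin n) ℝ)
    (hint : ∀ i j, ∃ z : ℤ, M i j = (z : ℝ))
    (hrank : M.rank = d)
    (huni : ∀ f : Fin d → Fin n, Function.Injective f →
      (M.submatrix id f).det ∈ ({-1, 0, 1} : Set ℝ))
    (D : Matrix (Fin n) (Fin n) ℝ)
    (hDdiag : ∀ i j, i ≠ j → D i j = 0)
    (hDpos : ∀ i, 0 ≤ D i i) :
    volume (zonotope (M * D * M.transpose)) = volume (zonotope (M * D)) ∧
    volume (zonotope (M * D * M.transpose)) = ENNReal.ofReal (M * D * M.transpose).det := by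
  obtain ⟨w, rfl⟩ : ∃ w, D = Matrix.diagonal w := by
    refine ⟨fun i => D i i, ?_⟩
    ext i j
    by_cases h : i = j
    · subst h; simp
    · rw [Matrix.diagonal_apply_ne _ h, hDdiag i j h]
  have hw : ∀ i, 0 ≤ w i := fun i => by simpa using hDpos i
  have h1 := zn_main n d M w 1 hw zero_le_one (by
    intro f
    by_cases hf : Function.Injective f
    · rcases huni f hf with h | h | h <;> rw [h] <;> norm_num
    · simp only [Function.Injective] at hf
      push Not at hf
      obtain ⟨a, b, hab, hne⟩ := hf
      rw [Matrix.det_zero_of_column_eq hne (by intro k; simp [hab])]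
      simp)
  have h2 : volume (zonotope (M * Matrix.diagonal w * M.transpose)) =
      ENNReal.ofReal (M * Matrix.diagonal w * M.transpose).det := by
    have h3 := zn_mul (M * Matrix.diagonal w * M.transpose) (1 : Matrix (Fin d) (Fin d) ℝ)
    rw [mul_one] at h3
    have h4 : zonotope (1 : Matrix (Fin d) (Fin d) ℝ) = Set.univ.pi fun _ => Set.Icc (0:ℝ) 1 := by
      ext y
      simp only [zonotope, Matrix.one_mulVec, Set.mem_univ_pi, Set.mem_ofPred_eq]
      exact ⟨fun ⟨x, hx, h⟩ => h ▸ hx, fun h => ⟨y, h, rfl⟩⟩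
    rw [h3, h4, volume_pi_pi, abs_of_nonneg (zn_lap_nonneg M w hw)]
    simp
  rw [ENNReal.ofReal_one, one_mul] at h1
  exact ⟨h2.trans h1.symm, h2⟩
end

section
/- Let G be a connected simple graph on n vertices, fix an orientation of its edges, let N be the resulting n×m signed vertex-edge incidence matrix, and let L = N·Nᵀ be the Laplacian of G. Then the (n−1)-dimensional Hausdorff measure of the zonotope Z(L) equals n times the (n−1)-dimensional Hausdorff measure of the zonotope Z(N). (Both zonotopes lie in the hyperplane of ℝⁿ orthogonal to the all-ones vector.) -/
open MeasureTheory

/-- The zonotope generated by a `d × k` real matrix, viewed inside Euclidean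
space `ℝ^d` (so that Hausdorff measures are taken w.r.t. the Euclidean
metric): the image of the unit cube `[0,1]^k` under `x ↦ M x`. -/
def zonotopeE {d k : ℕ} (M : Matrix (Fin d) (Fin k) ℝ) : Set (EuclideanSpace ℝ (Fin d)) :=
  {y | ∃ x : Fin k → ℝ, (∀ i, x i ∈ Set.Icc (0 : ℝ) 1) ∧
    y = (WithLp.equiv 2 (Fin d → ℝ)).symm (M.mulVec x)}


/-- zonotope in the plain function space -/
def zonP {d k : ℕ} (A : Matrix (Fin d) (Fin k) ℝ) : Set (Fin d → ℝ) :=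
  A.mulVec '' Set.Icc 0 1

lemma det_unimod {V : Type*} [DecidableEq V] : ∀ (d : ℕ) (f a b : Fin d → V),
    (Matrix.of fun i j => (if f i = a j then (1:ℝ) else 0) - (if f i = b j then 1 else 0)).det = 0 ∨
    |(Matrix.of fun i j => (if f i = a j then (1:ℝ) else 0) - (if f i = b j then 1 else 0)).det| = 1 := by
  intro d
  induction d with
  | zero => intro f a b; right; simp
  | succ d ih =>
    intro f a b
    by_cases hf : Function.Injective f
    swap
    · left
      simp only [Function.Injective, not_forall] at hf
      obtain ⟨i, j, hij, hne⟩ := hf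
      apply Matrix.det_zero_of_row_eq hne
      ext k; simp [hij]
    by_cases hall : ∀ j, (∃ i, f i = a j) ∧ (∃ i, f i = b j)
    · left
      rw [← Matrix.exists_vecMul_eq_zero_iff]
      refine ⟨fun _ => 1, fun h => one_ne_zero (congrFun h 0), ?_⟩
      ext j
      obtain ⟨⟨i, hi⟩, ⟨i', hi'⟩⟩ := hall j
      simp [Matrix.vecMul, dotProduct, ← hi, ← hi', hf.eq_iff]
    · set A : Matrix (Fin (d+1)) (Fin (d+1)) ℝ := Matrix.of fun i j => (if f i = a j then (1:ℝ) else 0) - (if f i = b j then 1 else 0) with hA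
      have key : ∃ j, ∃ s : ℝ, ∃ w, |s| = 1 ∧ ∀ i, A i j = s * (if f i = w then 1 else 0) := by
        simp only [not_forall, not_and_or, not_exists] at hall
        obtain ⟨j, h | h⟩ := hall
        · exact ⟨j, -1, b j, by simp, fun i => by simp only [hA, Matrix.of_apply, if_neg (h i)]; ring⟩
        · exact ⟨j, 1, a j, by simp, fun i => by simp [hA, h i]⟩
      obtain ⟨j, s, w, hs, hw⟩ := key
      rw [Matrix.det_succ_column A j]
      by_cases hex : ∃ i0, f i0 = w
      · obtain ⟨i0, hi0⟩ := hex
        rw [Finset.sum_eq_single i0]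
        · have := ih (f ∘ i0.succAbove) (a ∘ j.succAbove) (b ∘ j.succAbove)
          have e : (Matrix.of fun i j_1 => (if (f ∘ i0.succAbove) i = (a ∘ j.succAbove) j_1 then (1:ℝ) else 0) - (if (f ∘ i0.succAbove) i = (b ∘ j.succAbove) j_1 then 1 else 0)) = A.submatrix i0.succAbove j.succAbove := by
            ext; simp [hA]
          rw [e] at this
          rcases this with h | h
          · left; rw [h, mul_zero]
          · right; rw [abs_mul, abs_mul, h, hw]; simp [hi0, hs]
        · intro i _ hi
          rw [hw, if_neg (fun h => hi (hf (h.trans hi0.symm)))]; simp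
        · simp
      · left
        apply Finset.sum_eq_zero
        intro i _
        rw [hw, if_neg (fun h => hex ⟨i, h⟩)]; simp

lemma zonP_compact {d k : ℕ} (A : Matrix (Fin d) (Fin k) ℝ) : IsCompact (zonP A) :=
  isCompact_Icc.image (Continuous.matrix_mulVec continuous_const continuous_id)

lemma zonP_convex {d k : ℕ} (A : Matrix (Fin d) (Fin k) ℝ) : Convex ℝ (zonP A) :=
  (convex_Icc _ _).linear_image A.mulVecLin

lemma zonP_mul {d e k : ℕ} (g : Matrix (Fin e) (Fin d) ℝ) (A : Matrix (Fin d) (Fin k) ℝ) :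
    zonP (g * A) = g.mulVec '' zonP A := by
  unfold zonP
  rw [Set.image_image]
  simp

lemma vol_mul {d k : ℕ} (g : Matrix (Fin d) (Fin d) ℝ) (A : Matrix (Fin d) (Fin k) ℝ) :
    volume (zonP (g * A)) = ENNReal.ofReal |g.det| * volume (zonP A) := by
  rw [zonP_mul]
  have := Measure.addHaar_image_linearMap volume g.mulVecLin (zonP A)
  rw [← Matrix.toLin'_apply', LinearMap.det_toLin'] at this
  exact this

lemma vol_interval (T : Set ℝ) (hc : IsCompact T) (hv : Convex ℝ T) (hn : T.Nonempty) :
    volume {t | ∃ s ∈ Set.Icc (0:ℝ) 1, t - s ∈ T} = volume T + 1 := by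
  obtain ⟨a, b, hab, rfl⟩ : ∃ a b, a ≤ b ∧ T = Set.Icc a b := by
    have := eq_Icc_csInf_csSup_of_connected_bdd_closed ⟨hn, hv.isPreconnected⟩ hc.bddBelow hc.bddAbove hc.isClosed
    refine ⟨_, _, ?_, this⟩
    rw [this] at hn
    exact Set.nonempty_Icc.1 hn
  have : {t | ∃ s ∈ Set.Icc (0:ℝ) 1, t - s ∈ Set.Icc a b} = Set.Icc a (b+1) := by
    ext t
    simp only [Set.mem_ofPred_eq, Set.mem_Icc]
    constructor
    · rintro ⟨s, hs, h⟩; constructor <;> linarith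
    · rintro ⟨h1, h2⟩
      rcases le_total t b with h | h
      · exact ⟨0, by simp, by simp [h1, h]⟩
      · exact ⟨t - b, ⟨by linarith, by linarith⟩, by linarith, by linarith⟩
  rw [this, Real.volume_Icc, Real.volume_Icc, ← ENNReal.ofReal_one, ← ENNReal.ofReal_add (by linarith) (by norm_num)]
  congr 1; ring

lemma vol_slice {d : ℕ} (S : Set (Fin (d+1) → ℝ)) (hS : MeasurableSet S) :
    volume S = ∫⁻ y : Fin d → ℝ, volume {t : ℝ | Fin.cons t y ∈ S} := by
  have h := (volume_preserving_piFinSuccAbove (fun _ : Fin (d+1) => ℝ) 0).symm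
  rw [← h.measure_preimage hS.nullMeasurableSet]
  rw [Measure.volume_eq_prod, Measure.prod_apply_symm (h.measurable hS)]
  congr 1
  ext y
  congr 1
  ext t
  change Fin.insertNth 0 t y ∈ S ↔ Fin.cons t y ∈ S
  rw [Fin.insertNth_zero']

/-- slicing step -/
lemma vol_add {d : ℕ} (K : Set (Fin (d+1) → ℝ)) (hc : IsCompact K) (hv : Convex ℝ K) :
    volume {y | ∃ s ∈ Set.Icc (0:ℝ) 1, y - (Pi.single 0 s : Fin (d+1) → ℝ) ∈ K} = volume K + volume (Fin.tail '' K) := by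
  have hcomp : IsCompact {y | ∃ s ∈ Set.Icc (0:ℝ) 1, y - (Pi.single 0 s : Fin (d+1) → ℝ) ∈ K} := by
    have : {y | ∃ s ∈ Set.Icc (0:ℝ) 1, y - (Pi.single 0 s : Fin (d+1) → ℝ) ∈ K} = (fun p : ℝ × (Fin (d+1) → ℝ) => (Pi.single 0 p.1 : Fin (d+1) → ℝ) + p.2) '' (Set.Icc (0:ℝ) 1 ×ˢ K) := by
      ext y
      constructor
      · rintro ⟨s, hs, h⟩; exact ⟨(s, _), ⟨hs, h⟩, by simp⟩
      · rintro ⟨⟨s, z⟩, ⟨hs, h⟩, rfl⟩; exact ⟨s, hs, by simpa using h⟩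
    rw [this]
    refine (isCompact_Icc.prod hc).image ?_
    have : Continuous fun s : ℝ => (Pi.single 0 s : Fin (d+1) → ℝ) := by
      refine continuous_pi fun i => ?_
      refine Fin.cases ?_ (fun i => ?_) i <;> simp <;> fun_prop
    fun_prop
  have htail : IsCompact (Fin.tail '' K : Set (Fin d → ℝ)) :=
    hc.image (by unfold Fin.tail; fun_prop)
  rw [vol_slice _ hcomp.measurableSet, vol_slice _ hc.measurableSet]
  rw [← lintegral_indicator_one htail.measurableSet, ← lintegral_add_right _ (measurable_one.indicator htail.measurableSet)]
  congr 1
  ext y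
  have e : {t : ℝ | (Fin.cons t y : Fin (d+1) → ℝ) ∈ {y | ∃ s ∈ Set.Icc (0:ℝ) 1, y - (Pi.single 0 s : Fin (d+1) → ℝ) ∈ K}} = {t | ∃ s ∈ Set.Icc (0:ℝ) 1, t - s ∈ {t : ℝ | (Fin.cons t y : Fin (d+1) → ℝ) ∈ K}} := by
    ext t
    simp only [Set.mem_ofPred_eq]
    have : ∀ s : ℝ, (Fin.cons t y - Pi.single 0 s : Fin (d+1) → ℝ) = Fin.cons (t - s) y := by
      intro s; ext i; refine Fin.cases ?_ (fun i => ?_) i <;> simp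
    simp [this]
  rw [e]
  by_cases hy : y ∈ (Fin.tail '' K : Set (Fin d → ℝ))
  · rw [Set.indicator_of_mem hy]
    apply vol_interval
    · have hcl : Topology.IsClosedEmbedding (fun t : ℝ => (Fin.cons t y : Fin (d+1) → ℝ)) := by
        refine Topology.IsClosedEmbedding.of_continuous_injective_isClosedMap ?_ ?_ ?_
        · refine continuous_pi fun i => ?_
          refine Fin.cases ?_ (fun i => ?_) i <;> simp <;> fun_prop
        · intro a b h; simpa using congrFun h 0
        · intro C hC
          have : (fun t : ℝ => (Fin.cons t y : Fin (d+1) → ℝ)) '' C = {z | z 0 ∈ C} ∩ {z | Fin.tail z = y} := by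
            ext z
            constructor
            · rintro ⟨t, ht, rfl⟩; simpa using ht
            · rintro ⟨h, rfl⟩; exact ⟨z 0, h, by simp⟩
          rw [this]
          refine (hC.preimage (continuous_apply 0)).inter (isClosed_eq (by unfold Fin.tail; fun_prop) continuous_const)
      exact hcl.isCompact_preimage hc
    · intro t ht s hs a b ha hb hab
      have := hv ht hs ha hb hab
      simp only [Set.mem_ofPred_eq]
      convert this using 1
      ext i
      refine Fin.cases ?_ (fun i => ?_) i
      · simp
      · simp [← add_mul, hab]
    · obtain ⟨z, hz, rfl⟩ := hy
      exact ⟨z 0, by simpa using hz⟩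
  · rw [Set.indicator_of_notMem hy]
    have : {t : ℝ | (Fin.cons t y : Fin (d+1) → ℝ) ∈ K} = ∅ := by
      ext t; simp only [Set.mem_ofPred_eq, Set.mem_empty_iff_false, iff_false]
      exact fun h => hy ⟨_, h, by simp⟩
    simp [this]

lemma zonP_cons {d k : ℕ} (B : Matrix (Fin (d+1)) (Fin (k+1)) ℝ)
    (hB : ∀ i, B i 0 = (Pi.single 0 1 : Fin (d+1) → ℝ) i) :
    zonP B = {y | ∃ s ∈ Set.Icc (0:ℝ) 1,
      y - (Pi.single 0 s : Fin (d+1) → ℝ) ∈ zonP (B.submatrix id Fin.succ)} := by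
  have hmv : ∀ x : Fin (k+1) → ℝ, B.mulVec x =
      (Pi.single 0 (x 0) : Fin (d+1) → ℝ) + (B.submatrix id Fin.succ).mulVec (Fin.tail x) := by
    intro x
    ext i
    simp only [Matrix.mulVec, dotProduct, Fin.sum_univ_succ, Pi.add_apply, hB]
    congr 1
    refine Fin.cases ?_ (fun i => ?_) i <;> simp
  ext y
  constructor
  · rintro ⟨x, hx, rfl⟩
    refine ⟨x 0, ⟨hx.1 0, hx.2 0⟩, Fin.tail x, ⟨fun i => hx.1 i.succ, fun i => hx.2 i.succ⟩, ?_⟩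
    rw [hmv]; simp
  · rintro ⟨s, hs, x, hx, hxy⟩
    refine ⟨Fin.cons s x, ⟨?_, ?_⟩, ?_⟩
    · intro i; refine Fin.cases ?_ (fun i => ?_) i
      · simpa using hs.1
      · simpa using hx.1 i
    · intro i; refine Fin.cases ?_ (fun i => ?_) i
      · simpa using hs.2
      · simpa using hx.2 i
    · rw [hmv]; simp [hxy]

lemma tail_zonP {d k : ℕ} (T : Matrix (Fin (d+1)) (Fin k) ℝ) :
    (Fin.tail '' zonP T : Set (Fin d → ℝ)) = zonP (T.submatrix Fin.succ id) := by
  unfold zonP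
  rw [Set.image_image]
  rfl

lemma det_cons {d k : ℕ} (B : Matrix (Fin (d+1)) (Fin (k+1)) ℝ)
    (hB : ∀ i, B i 0 = (Pi.single 0 1 : Fin (d+1) → ℝ) i) :
    (B * B.transpose).det =
      (B.submatrix id Fin.succ * (B.submatrix id Fin.succ).transpose).det +
      (B.submatrix Fin.succ Fin.succ * (B.submatrix Fin.succ Fin.succ).transpose).det := by
  set M := B.submatrix id Fin.succ * (B.submatrix id Fin.succ).transpose with hM
  have h1 : B * B.transpose = M.updateRow 0 (M 0 + Pi.single 0 1) := by
    ext i j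
    simp only [Matrix.mul_apply, Fin.sum_univ_succ, Matrix.transpose_apply, hB, hM]
    refine Fin.cases ?_ (fun i => ?_) i
    · simp [Matrix.mul_apply, add_comm]
    · simp [Matrix.updateRow_ne, Matrix.mul_apply]
  rw [h1, Matrix.det_updateRow_add, Matrix.updateRow_eq_self]
  congr 1
  rw [Matrix.det_succ_row_zero, Fin.sum_univ_succ]
  simp
  congr 1

lemma vol_zon : ∀ (k d : ℕ) (A : Matrix (Fin d) (Fin k) ℝ) (c : ℝ), 0 < c →
    (∀ f : Fin d → Fin k, (A.submatrix id f).det = 0 ∨ |(A.submatrix id f).det| = c) →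
    ENNReal.ofReal c * volume (zonP A) = ENNReal.ofReal (A * A.transpose).det := by
  intro k
  induction k with
  | zero =>
    intro d A c hc h
    have hz : zonP A = {0} := by
      unfold zonP
      ext y
      constructor
      · rintro ⟨x, _, rfl⟩; ext i; simp [Matrix.mulVec, dotProduct]
      · rintro rfl; exact ⟨0, by simp, by simp⟩
    rw [hz]
    cases d with
    | zero =>
      have := h Fin.elim0
      simp at this
      have hu : ({0} : Set (Fin 0 → ℝ)) = Set.univ := by
        ext x; simpa using Subsingleton.elim x 0
      rw [hu, volume_pi, Measure.pi_univ]
      simp [← this]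
    | succ d =>
      have : A * A.transpose = 0 := by ext i j; simp [Matrix.mul_apply]
      rw [this]
      simp
  | succ k ih =>
    intro d A c hc h
    by_cases hv : A.col 0 = 0
    · have hv' : ∀ i, A i 0 = 0 := fun i => congrFun hv i
      have := ih d (A.submatrix id Fin.succ) c hc (fun f => h (Fin.succ ∘ f))
      have e1 : A.submatrix id Fin.succ * (A.submatrix id Fin.succ).transpose = A * A.transpose := by
        ext i j; simp [Matrix.mul_apply, Fin.sum_univ_succ, hv']
      have e2 : zonP (A.submatrix id Fin.succ) = zonP A := by
        have hmv : ∀ x : Fin (k+1) → ℝ, A.mulVec x =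
            (A.submatrix id Fin.succ).mulVec (Fin.tail x) := by
          intro x
          ext i
          simp only [Matrix.mulVec, dotProduct, Fin.sum_univ_succ, hv']
          simp [Fin.tail]
        ext y
        constructor
        · rintro ⟨x, hx, rfl⟩
          refine ⟨Fin.cons 0 x, ⟨?_, ?_⟩, by rw [hmv]; simp⟩
          · intro i; refine Fin.cases ?_ (fun i => ?_) i
            · simp
            · simpa using hx.1 i
          · intro i; refine Fin.cases ?_ (fun i => ?_) i
            · simp
            · simpa using hx.2 i
        · rintro ⟨x, hx, rfl⟩
          exact ⟨Fin.tail x, ⟨fun i => hx.1 i.succ, fun i => hx.2 i.succ⟩, by rw [hmv]⟩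
      rwa [e1, e2] at this
    · cases d with
      | zero => exact absurd (Subsingleton.elim _ _) hv
      | succ d =>
        obtain ⟨e, he⟩ := SeparatingDual.exists_continuousLinearEquiv_apply_eq (R := ℝ)
          (x := A.col 0) (y := (Pi.single 0 1 : Fin (d+1) → ℝ)) hv (by simp)
        set g : Matrix (Fin (d+1)) (Fin (d+1)) ℝ := LinearMap.toMatrix' (e : (Fin (d+1) → ℝ) →ₗ[ℝ] (Fin (d+1) → ℝ)) with hg
        have hgv : ∀ v, g.mulVec v = e v := by
          intro v
          rw [hg, LinearMap.toMatrix'_mulVec]; rfl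
        have hdet : g.det ≠ 0 := by
          intro h0
          obtain ⟨v, hv0, hv1⟩ := Matrix.exists_mulVec_eq_zero_iff.2 h0
          rw [hgv] at hv1
          exact hv0 (by simpa using hv1)
        have hpos : 0 < |g.det| := abs_pos.2 hdet
        set B := g * A with hBd
        have hB : ∀ i, B i 0 = (Pi.single 0 1 : Fin (d+1) → ℝ) i := by
          intro i
          rw [← he, ← hgv]; rfl
        have hmin : ∀ f : Fin (d+1) → Fin (k+1),
            (B.submatrix id f).det = 0 ∨ |(B.submatrix id f).det| = |g.det| * c := by
          intro f
          have : B.submatrix id f = g * A.submatrix id f := by ext; rfl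
          rw [this, Matrix.det_mul]
          rcases h f with h | h
          · left; simp [h]
          · right; rw [abs_mul, h]
        have hc' : 0 < |g.det| * c := by positivity
        have i1 := ih (d+1) (B.submatrix id Fin.succ) _ hc' (fun f => hmin (Fin.succ ∘ f))
        have i2 := ih d (B.submatrix Fin.succ Fin.succ) _ hc' (by
          intro f
          have : (B.submatrix id (Fin.cons 0 (Fin.succ ∘ f) : Fin (d+1) → Fin (k+1))).det =
              ((B.submatrix Fin.succ Fin.succ).submatrix id f).det := by
            rw [Matrix.det_succ_column_zero, Fin.sum_univ_succ]
            simp [hB]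
          rw [← this]
          exact hmin _)
        have hvol : volume (zonP B) = volume (zonP (B.submatrix id Fin.succ)) +
            volume (zonP (B.submatrix Fin.succ Fin.succ)) := by
          rw [zonP_cons B hB, vol_add _ (zonP_compact _) (zonP_convex _), tail_zonP]
          rfl
        have hnn : ∀ {p q : ℕ} (X : Matrix (Fin p) (Fin q) ℝ), 0 ≤ (X * X.transpose).det := by
          intro p q X
          simpa using (Matrix.posSemidef_self_mul_conjTranspose X).det_nonneg
        have hfin : ENNReal.ofReal (|g.det| * c) * volume (zonP B) =
            ENNReal.ofReal (B * B.transpose).det := by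
          rw [hvol, mul_add, i1, i2, det_cons B hB, ENNReal.ofReal_add (hnn _) (hnn _)]
        have hd2 : (B * B.transpose).det = |g.det| * |g.det| * (A * A.transpose).det := by
          have : B * B.transpose = g * (A * A.transpose) * g.transpose := by
            simp [hBd, Matrix.transpose_mul, Matrix.mul_assoc]
          rw [this, Matrix.det_mul, Matrix.det_mul, Matrix.det_transpose, abs_mul_abs_self]; ring
        rw [hd2, vol_mul, ENNReal.ofReal_mul (abs_nonneg _), ENNReal.ofReal_mul (by positivity), ENNReal.ofReal_mul (abs_nonneg _)] at hfin
        have hne0 : ENNReal.ofReal |g.det| * ENNReal.ofReal |g.det| ≠ 0 := by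
          simp [hdet]
        have hnet : ENNReal.ofReal |g.det| * ENNReal.ofReal |g.det| ≠ ⊤ :=
          ENNReal.mul_ne_top ENNReal.ofReal_ne_top ENNReal.ofReal_ne_top
        rw [← ENNReal.mul_right_inj hne0 hnet, ← hfin]
        ring

lemma zonotopeE_eq {d k : ℕ} (M : Matrix (Fin d) (Fin k) ℝ) :
    zonotopeE M = WithLp.toLp 2 '' zonP M := by
  ext y
  constructor
  · rintro ⟨x, hx, rfl⟩
    exact ⟨_, ⟨x, ⟨fun i => (hx i).1, fun i => (hx i).2⟩, rfl⟩, rfl⟩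
  · rintro ⟨_, ⟨x, hx, rfl⟩, rfl⟩
    exact ⟨x, fun i => ⟨hx.1 i, hx.2 i⟩, rfl⟩

lemma hausd {d n : ℕ} (P : Matrix (Fin n) (Fin d) ℝ) : ∃ C : ENNReal, ∀ S : Set (Fin d → ℝ),
    μH[(d:ℝ)] (WithLp.toLp 2 '' (P.mulVec '' S) : Set (EuclideanSpace ℝ (Fin n))) =
      C * volume S := by
  let φ : (Fin d → ℝ) ≃L[ℝ] EuclideanSpace ℝ (Fin d) := (EuclideanSpace.equiv (Fin d) ℝ).symm
  have h0 := fun s => LinearMap.hausdorffMeasure_image (Matrix.toEuclideanLin P) s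
  have hH : (μH[(d:ℝ)] : Measure (EuclideanSpace ℝ (Fin d))).IsAddHaarMeasure := by
    simpa using MeasureTheory.isAddHaarMeasure_hausdorffMeasure (E := EuclideanSpace ℝ (Fin d))
  have hv : ((volume : Measure (Fin d → ℝ)).map φ).IsAddHaarMeasure :=
    φ.isAddHaarMeasure_map _
  obtain ⟨c, hcc⟩ : ∃ c : ENNReal, (μH[(d:ℝ)] : Measure (EuclideanSpace ℝ (Fin d))) = c • ((volume : Measure (Fin d → ℝ)).map φ) :=
    ⟨_, Measure.isAddLeftInvariant_eq_smul _ _⟩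
  refine ⟨ENNReal.ofReal (Matrix.toEuclideanLin P).normDet * c, fun S => ?_⟩
  have h1 := h0 (WithLp.toLp 2 '' S)
  rw [finrank_euclideanSpace_fin] at h1
  have h2 : (μH[(d:ℝ)] : Measure (EuclideanSpace ℝ (Fin d))) (WithLp.toLp 2 '' S) = c * volume S := by
    rw [hcc, Measure.smul_apply, smul_eq_mul]
    congr 1
    have := (φ.toHomeomorph.toMeasurableEquiv).map_apply (μ := volume) (WithLp.toLp 2 '' S)
    refine this.trans ?_
    congr 1
    ext x
    constructor
    · rintro ⟨y, hy, hyx⟩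
      have : y = x := (WithLp.toLp_injective 2) hyx
      exact this ▸ hy
    · intro hx; exact ⟨x, hx, rfl⟩
  rw [h2, ← mul_assoc] at h1
  rw [← h1]
  congr 1
  rw [Set.image_image, Set.image_image]
  rfl

/-- For a connected simple graph `G` on `n` vertices with an orientation of its
`m` edges, signed incidence matrix `N` and Laplacian `L = N Nᵀ`, the
`(n−1)`-dimensional Hausdorff measure of the zonotope `Z(L)` is `n` times that
of the zonotope `Z(N)`. -/
theorem stmt16 (n m : ℕ) (G : SimpleGraph (Fin n)) [DecidableRel G.Adj]
    (hconn : G.Connected)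
    (head tail : Fin m → Fin n)
    (hedge : ∀ j, s(head j, tail j) ∈ G.edgeSet)
    (hinj : Function.Injective (fun j => s(head j, tail j)))
    (hsurj : ∀ e ∈ G.edgeSet, ∃ j, s(head j, tail j) = e)
    (N : Matrix (Fin n) (Fin m) ℝ)
    (hN : N = fun v j => if v = head j then (1 : ℝ) else if v = tail j then -1 else 0)
    (L : Matrix (Fin n) (Fin n) ℝ) (hL : L = N * N.transpose) :
    μH[((n : ℝ) - 1)] (zonotopeE L) = (n : ENNReal) * μH[((n : ℝ) - 1)] (zonotopeE N) := by
  cases n with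
  | zero => exact hconn.nonempty.some.elim0
  | succ d =>
    have hne : ∀ j, head j ≠ tail j := fun j => G.ne_of_adj (hedge j)
    have hN' : ∀ i j, N i j = (if i = head j then (1:ℝ) else 0) - (if i = tail j then 1 else 0) := by
      intro i j
      rw [hN]
      by_cases h1 : i = head j
      · subst h1; simp [hne j]
      · simp only [if_neg h1]; split_ifs <;> simp
    set R : Matrix (Fin d) (Fin m) ℝ := N.submatrix Fin.succ id with hR
    set E : Matrix (Fin d) (Fin (d+1)) ℝ :=
      Matrix.of fun i j => (if j = i.succ then (1:ℝ) else 0) - (if j = 0 then 1 else 0) with hE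
    have hNE : N = E.transpose * R := by
      ext i j
      have hsum : ∑ i, N i j = 0 := by simp [hN']
      rw [Fin.sum_univ_succ] at hsum
      rw [Matrix.mul_apply]
      refine Fin.cases ?_ (fun i => ?_) i
      · simp [hE, hR, Fin.succ_ne_zero, (Fin.succ_ne_zero _).symm]; linarith
      · simp [hE, hR, Fin.succ_ne_zero]
    have hLE : L = E.transpose * ((R * R.transpose) * E) := by
      rw [hL, hNE]; simp [Matrix.transpose_mul, Matrix.mul_assoc]
    have volR := vol_zon m d R 1 one_pos (by
      intro f
      have := det_unimod d (Fin.succ : Fin d → Fin (d+1)) (head ∘ f) (tail ∘ f)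
      have e : R.submatrix id f = Matrix.of fun i j => (if Fin.succ i = (head ∘ f) j then (1:ℝ) else 0) - (if Fin.succ i = (tail ∘ f) j then 1 else 0) := by
        ext i j; simp [hR, hN']
      rw [e]; exact this)
    have volE := vol_zon (d+1) d E 1 one_pos (by
      intro f
      have := det_unimod d f Fin.succ (fun _ => 0)
      rw [← Matrix.det_transpose]
      exact this)
    have hEE : (E * E.transpose).det = d + 1 := by
      have : E * E.transpose = 1 + Matrix.replicateCol Unit (fun _ => (1:ℝ)) * Matrix.replicateRow Unit (fun _ => (1:ℝ)) := by
        ext i j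
        simp [Matrix.mul_apply, hE, Fin.sum_univ_succ, (Fin.succ_ne_zero _).symm, Matrix.one_apply, eq_comm, add_comm]
      rw [this, Matrix.det_one_add_replicateCol_mul_replicateRow]
      simp [dotProduct, add_comm]
    obtain ⟨C, hC⟩ := hausd E.transpose
    have hd : (((d+1 : ℕ) : ℝ) - 1) = d := by push_cast; ring
    have hnn : 0 ≤ (R * R.transpose).det := by
      simpa using (Matrix.posSemidef_self_mul_conjTranspose R).det_nonneg
    rw [hd, zonotopeE_eq, zonotopeE_eq, hLE]
    conv_rhs => rw [hNE]
    rw [zonP_mul E.transpose, zonP_mul E.transpose, hC, hC, vol_mul]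
    simp only [ENNReal.ofReal_one, one_mul] at volR volE
    rw [volR, volE, hEE, abs_of_nonneg hnn]
    have : ENNReal.ofReal ((d:ℝ) + 1) = ((d+1 : ℕ) : ENNReal) := by
      rw [← ENNReal.ofReal_natCast]; push_cast; rfl
    rw [this]; ring
end
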